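/- arXiv:1503.05995 — 6 statements merged into one kernel-verified Lean document; each statement's English description precedes it below -/
import Mathlib

section
/- Let φ : M_a × M_b → M_c be a ℂ-bilinear map. Then: (i) for q,r ∈ ℕ, φ is (1,q,r)-positive if and only if φ is (1, q∧r, q∧r)-positive, where q∧r = min(q,r); (ii) for p,r ∈ ℕ, φ is (p,1,r)-positive if and only if φ is (p∧r, 1, p∧r)-positive. -/
open Matrix Kronecker ComplexOrder

noncomputable section

abbrev Mat (n : ℕ) := Matrix (Fin n) (Fin n) ℂ

def blk {p a : ℕ} (x : Matrix (Fin p × Fin a) (Fin p × Fin a) ℂ) (i j : Fin p) :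
    Mat a := Matrix.of fun s t => x (i, s) (j, t)

def ampl {a b c p q : ℕ} (φ : Mat a →ₗ[ℂ] Mat b →ₗ[ℂ] Mat c)
    (x : Matrix (Fin p × Fin a) (Fin p × Fin a) ℂ)
    (y : Matrix (Fin q × Fin b) (Fin q × Fin b) ℂ) :
    Matrix ((Fin p × Fin q) × Fin c) ((Fin p × Fin q) × Fin c) ℂ :=
  Matrix.of fun u v => φ (blk x u.1.1 v.1.1) (blk y u.1.2 v.1.2) u.2 v.2

def compress {c p q r : ℕ} (α : Matrix (Fin r) (Fin p × Fin q) ℂ)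
    (X : Matrix ((Fin p × Fin q) × Fin c) ((Fin p × Fin q) × Fin c) ℂ) :
    Matrix (Fin r × Fin c) (Fin r × Fin c) ℂ :=
  Matrix.of fun u v => ∑ ik, ∑ jl, α u.1 ik * (starRingEnd ℂ) (α v.1 jl) * X (ik, u.2) (jl, v.2)

def IsPQRPos {a b c : ℕ} (φ : Mat a →ₗ[ℂ] Mat b →ₗ[ℂ] Mat c) (p q r : ℕ) : Prop :=
  ∀ (x : Matrix (Fin p × Fin a) (Fin p × Fin a) ℂ), x.PosSemidef →
  ∀ (y : Matrix (Fin q × Fin b) (Fin q × Fin b) ℂ), y.PosSemidef →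
  ∀ (α : Matrix (Fin r) (Fin p × Fin q) ℂ), (compress α (ampl φ x y)).PosSemidef

def cj {ι κ d : Type*} [Fintype ι] (γ : Matrix κ ι ℂ) (X : Matrix (ι × d) (ι × d) ℂ) :
    Matrix (κ × d) (κ × d) ℂ :=
  Matrix.of fun u v => ∑ i, ∑ j, γ u.1 i * (starRingEnd ℂ) (γ v.1 j) * X (i, u.2) (j, v.2)

lemma cj_eq {ι κ d : Type*} [Fintype ι] [Fintype d] [DecidableEq d] (γ : Matrix κ ι ℂ)
    (X : Matrix (ι × d) (ι × d) ℂ) :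
    cj γ X = (γ ⊗ₖ (1 : Matrix d d ℂ)) * X * (γ ⊗ₖ (1 : Matrix d d ℂ))ᴴ := by
  ext ⟨k, s⟩ ⟨l, t⟩
  simp only [cj, Matrix.of_apply, Matrix.mul_apply, Fintype.sum_prod_type, kroneckerMap_apply,
    conjTranspose_apply, Matrix.one_apply, Finset.sum_mul]
  simp [Finset.sum_ite_eq, apply_ite (starRingEnd ℂ)]
  rw [Finset.sum_comm]
  refine Finset.sum_congr rfl fun i _ => Finset.sum_congr rfl fun j _ => ?_
  ring

lemma cj_pos {ι κ d : Type*} [Fintype ι] [Fintype κ] [Fintype d] [DecidableEq d]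
    (γ : Matrix κ ι ℂ) {X : Matrix (ι × d) (ι × d) ℂ} (hX : X.PosSemidef) :
    (cj γ X).PosSemidef := by
  rw [cj_eq]
  exact hX.mul_mul_conjTranspose_same _

lemma cj_cj {ι κ l d : Type*} [Fintype ι] [Fintype κ] [Fintype d] [DecidableEq d]
    (β : Matrix l κ ℂ) (γ : Matrix κ ι ℂ) (X : Matrix (ι × d) (ι × d) ℂ) :
    cj β (cj γ X) = cj (β * γ) X := by
  have h : (β * γ) ⊗ₖ (1 : Matrix d d ℂ) = (β ⊗ₖ (1 : Matrix d d ℂ)) * (γ ⊗ₖ (1 : Matrix d d ℂ)) := by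
    rw [← Matrix.mul_kronecker_mul, Matrix.one_mul]
  rw [cj_eq, cj_eq, cj_eq, h, conjTranspose_mul]
  simp only [Matrix.mul_assoc]

lemma cj_one {ι d : Type*} [Fintype ι] [DecidableEq ι] [Fintype d] [DecidableEq d]
    (X : Matrix (ι × d) (ι × d) ℂ) : cj (1 : Matrix ι ι ℂ) X = X := by
  rw [cj_eq, Matrix.one_kronecker_one]; simp

lemma compress_eq {c p q r : ℕ} (α : Matrix (Fin r) (Fin p × Fin q) ℂ)
    (X : Matrix ((Fin p × Fin q) × Fin c) ((Fin p × Fin q) × Fin c) ℂ) :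
    compress α X = cj α X := rfl

/-- The matrix `1 ⊗ γ`. -/
def hat {m q : ℕ} (γ : Matrix (Fin m) (Fin q) ℂ) : Matrix (Fin 1 × Fin m) (Fin 1 × Fin q) ℂ :=
  Matrix.of fun u v => γ u.2 v.2

lemma hat_mul {m q n : ℕ} (β : Matrix (Fin n) (Fin m) ℂ) (γ : Matrix (Fin m) (Fin q) ℂ) :
    hat β * hat γ = hat (β * γ) := by
  ext u v
  simp [hat, Matrix.mul_apply, Fintype.sum_prod_type]

lemma hat_one {m : ℕ} : hat (1 : Matrix (Fin m) (Fin m) ℂ) = 1 := by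
  ext ⟨u, u'⟩ ⟨v, v'⟩
  simp [hat, Matrix.one_apply, Prod.ext_iff, Subsingleton.elim u v]

lemma ampl_cj {a b c m q : ℕ} (φ : Mat a →ₗ[ℂ] Mat b →ₗ[ℂ] Mat c)
    (x : Matrix (Fin 1 × Fin a) (Fin 1 × Fin a) ℂ)
    (y : Matrix (Fin q × Fin b) (Fin q × Fin b) ℂ) (γ : Matrix (Fin m) (Fin q) ℂ) :
    ampl φ x (cj γ y) = cj (hat γ) (ampl φ x y) := by
  have h : ∀ k l, blk (cj γ y) k l =
      ∑ i, ∑ j, (γ k i * (starRingEnd ℂ) (γ l j)) • blk y i j := by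
    intro k l
    ext s t
    simp [blk, cj, Matrix.sum_apply]
  ext ⟨⟨u, u'⟩, s⟩ ⟨⟨v, v'⟩, t⟩
  have hu := Subsingleton.elim u 0
  have hv := Subsingleton.elim v 0
  subst hu hv
  simp only [ampl, Matrix.of_apply, h, map_sum, map_smul]
  simp [cj, hat, Matrix.sum_apply, Fintype.sum_prod_type]

lemma down {a b c m q r : ℕ} (φ : Mat a →ₗ[ℂ] Mat b →ₗ[ℂ] Mat c)
    (hq : m ≤ q) (hr : m ≤ r) (H : IsPQRPos φ 1 q r) : IsPQRPos φ 1 m m := by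
  have key : ∀ n, m ≤ n → ∃ (E : Matrix (Fin m) (Fin n) ℂ) (K : Matrix (Fin n) (Fin m) ℂ),
      E * K = 1 := by
    intro n h
    refine ⟨(1 : Matrix (Fin n) (Fin n) ℂ).submatrix (Fin.castLE h) id,
      (1 : Matrix (Fin n) (Fin n) ℂ).submatrix id (Fin.castLE h), ?_⟩
    rw [← Matrix.submatrix_mul _ _ _ _ _ Function.bijective_id, Matrix.one_mul]
    exact Matrix.submatrix_one _ (Fin.castLE_injective h)
  obtain ⟨F, G, hFG⟩ := key q hq
  obtain ⟨E, K, hEK⟩ := key r hr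
  intro x hx y hy α
  have h1 := cj_pos E (H x hx (cj G y) (cj_pos G hy) (K * α * hat F))
  rw [compress_eq, ampl_cj, cj_cj, cj_cj] at h1
  have h2 : E * (K * α * hat F * hat G) = α := by
    rw [Matrix.mul_assoc, hat_mul, hFG, hat_one, Matrix.mul_one, ← Matrix.mul_assoc, hEK,
      Matrix.one_mul]
  rw [← Matrix.mul_assoc] at h2
  rw [compress_eq]
  rwa [h2] at h1

lemma up {a b c m q r : ℕ} (φ : Mat a →ₗ[ℂ] Mat b →ₗ[ℂ] Mat c) (H : IsPQRPos φ 1 m m)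
    (hf : ∀ α : Matrix (Fin r) (Fin 1 × Fin q) ℂ, ∃ (β : Matrix (Fin r) (Fin 1 × Fin m) ℂ)
      (γ : Matrix (Fin m) (Fin q) ℂ), α = β * hat γ) : IsPQRPos φ 1 q r := by
  intro x hx y hy α
  obtain ⟨β, γ, rfl⟩ := hf α
  rw [compress_eq, ← cj_cj, ← ampl_cj]
  apply cj_pos
  have h1 := cj_pos ((1 : Matrix (Fin m) (Fin m) ℂ).submatrix (Prod.snd : Fin 1 × Fin m → Fin m) id)
    (H x hx (cj γ y) (cj_pos γ hy) ((1 : Matrix (Fin m) (Fin m) ℂ).submatrix id Prod.snd))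
  rw [compress_eq, cj_cj, ← Matrix.submatrix_mul _ _ _ _ _ Function.bijective_id,
    Matrix.one_mul] at h1
  have h2 : (1 : Matrix (Fin m) (Fin m) ℂ).submatrix (Prod.snd : Fin 1 × Fin m → Fin m)
      (Prod.snd : Fin 1 × Fin m → Fin m) = 1 := hat_one
  rwa [h2, cj_one] at h1

lemma part1 {a b c : ℕ} (φ : Mat a →ₗ[ℂ] Mat b →ₗ[ℂ] Mat c) (q r : ℕ) :
    IsPQRPos φ 1 q r ↔ IsPQRPos φ 1 (min q r) (min q r) := by
  refine ⟨down φ (min_le_left _ _) (min_le_right _ _), ?_⟩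
  rcases le_total q r with h | h
  · rw [min_eq_left h]
    intro H
    refine up φ H fun α => ⟨α, 1, ?_⟩
    rw [hat_one, Matrix.mul_one]
  · rw [min_eq_right h]
    intro H
    refine up φ H fun α => ⟨(1 : Matrix (Fin r) (Fin r) ℂ).submatrix id Prod.snd,
      Matrix.of fun i j => α i (0, j), ?_⟩
    ext i ⟨u, j⟩
    have hu := Subsingleton.elim u 0
    subst hu
    simp [Matrix.mul_apply, hat, Fintype.sum_prod_type, Matrix.one_apply]

lemma flip_imp {a b c : ℕ} (φ : Mat a →ₗ[ℂ] Mat b →ₗ[ℂ] Mat c) (p q r : ℕ)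
    (H : IsPQRPos φ.flip q p r) : IsPQRPos φ p q r := by
  intro x hx y hy α
  have h := H y hy x hx (α.submatrix id Prod.swap)
  convert h using 1
  ext u v
  simp only [compress, Matrix.of_apply, ampl, Matrix.submatrix_apply, LinearMap.flip_apply, id]
  refine Fintype.sum_equiv (Equiv.prodComm _ _) _ _ fun i => ?_
  refine Fintype.sum_equiv (Equiv.prodComm _ _) _ _ fun j => ?_
  simp

lemma flip_iff {a b c : ℕ} (φ : Mat a →ₗ[ℂ] Mat b →ₗ[ℂ] Mat c) (p q r : ℕ) :
    IsPQRPos φ p q r ↔ IsPQRPos φ.flip q p r :=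
  ⟨fun H => flip_imp φ.flip q p r (by rwa [LinearMap.flip_flip]), flip_imp φ p q r⟩

/-- Proposition "redundant2": (i) φ is (1,q,r)-positive iff φ is (1, q∧r, q∧r)-positive;
(ii) φ is (p,1,r)-positive iff φ is (p∧r, 1, p∧r)-positive. -/
theorem stmt1 {a b c : ℕ} (φ : Mat a →ₗ[ℂ] Mat b →ₗ[ℂ] Mat c) :
    (∀ q r : ℕ, IsPQRPos φ 1 q r ↔ IsPQRPos φ 1 (min q r) (min q r)) ∧
    (∀ p r : ℕ, IsPQRPos φ p 1 r ↔ IsPQRPos φ (min p r) 1 (min p r)) := by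
  refine ⟨part1 φ, fun p r => ?_⟩
  rw [flip_iff, part1, ← flip_iff]
end
end

section
/- Let φ : M_a × M_b → M_c be a ℂ-bilinear map and p ∈ ℕ. Then φ is (p,p,1)-positive if and only if Σ_{i,j=1}^p φ(x_{i,j}, y_{i,j}) is a positive matrix in M_c for every positive x = [x_{i,j}] ∈ M_p(M_a) and every positive y = [y_{i,j}] ∈ M_p(M_b). -/
open Matrix Kronecker ComplexOrder

noncomputable section

/-- The amplified conjugation of `x` by the transpose of `A`. -/
def conjBlk {p a : ℕ} (A : Matrix (Fin p) (Fin p) ℂ)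
    (x : Matrix (Fin p × Fin a) (Fin p × Fin a) ℂ) :
    Matrix (Fin p × Fin a) (Fin p × Fin a) ℂ :=
  (Aᵀ ⊗ₖ (1 : Mat a)) * x * (Aᵀ ⊗ₖ (1 : Mat a))ᴴ

lemma blk_conjBlk {p a : ℕ} (A : Matrix (Fin p) (Fin p) ℂ)
    (x : Matrix (Fin p × Fin a) (Fin p × Fin a) ℂ) (k l : Fin p) :
    blk (conjBlk A x) k l =
      ∑ i, ∑ j, (A i k * (starRingEnd ℂ) (A j l)) • blk x i j := by
  ext s t
  simp only [blk, conjBlk, Matrix.of_apply, Matrix.mul_apply, Matrix.sum_apply,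
    Matrix.smul_apply, Fintype.sum_prod_type, Matrix.conjTranspose_apply,
    Matrix.kroneckerMap_apply, Matrix.transpose_apply, Matrix.one_apply]
  simp only [mul_ite, ite_mul, mul_one, mul_zero, zero_mul, Finset.sum_ite_eq,
    Finset.mem_univ, if_true, apply_ite star, star_zero, smul_eq_mul, Finset.sum_mul]
  rw [Finset.sum_comm]
  refine Finset.sum_congr rfl fun i _ => Finset.sum_congr rfl fun j _ => ?_
  simp only [starRingEnd_apply]
  ring

lemma compress_eq_s3 {a b c p : ℕ} (φ : Mat a →ₗ[ℂ] Mat b →ₗ[ℂ] Mat c)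
    (x : Matrix (Fin p × Fin a) (Fin p × Fin a) ℂ)
    (y : Matrix (Fin p × Fin b) (Fin p × Fin b) ℂ)
    (α : Matrix (Fin 1) (Fin p × Fin p) ℂ) :
    compress α (ampl φ x y) =
      (∑ k : Fin p, ∑ l : Fin p,
        φ (blk (conjBlk (Matrix.of fun i k => α 0 (i, k)) x) k l) (blk y k l)).submatrix
          Prod.snd Prod.snd := by
  ext ⟨u, s⟩ ⟨v, t⟩
  obtain rfl := Subsingleton.elim u 0
  obtain rfl := Subsingleton.elim v 0
  simp only [blk_conjBlk, compress, ampl, Matrix.of_apply, Matrix.submatrix_apply,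
    Matrix.sum_apply, map_sum, map_smul, LinearMap.sum_apply, LinearMap.smul_apply,
    Matrix.smul_apply, smul_eq_mul, Fintype.sum_prod_type]
  rw [Finset.sum_comm]
  refine Finset.sum_congr rfl fun k _ => ?_
  conv_rhs => rw [Finset.sum_comm]
  refine Finset.sum_congr rfl fun i _ => ?_
  rw [Finset.sum_comm]

/-- Proposition "1pp" (iii): φ is (p,p,1)-positive iff Σ_{i,j} φ(x_{ij}, y_{ij}) is
positive for all positive x ∈ M_p(M_a), y ∈ M_p(M_b). -/
theorem stmt3 {a b c : ℕ} (φ : Mat a →ₗ[ℂ] Mat b →ₗ[ℂ] Mat c) (p : ℕ) :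
    IsPQRPos φ p p 1 ↔
      ∀ (x : Matrix (Fin p × Fin a) (Fin p × Fin a) ℂ), x.PosSemidef →
      ∀ (y : Matrix (Fin p × Fin b) (Fin p × Fin b) ℂ), y.PosSemidef →
        (∑ i : Fin p, ∑ j : Fin p, φ (blk x i j) (blk y i j)).PosSemidef := by
  constructor
  · intro h x hx y hy
    have h1 := (h x hx y hy (Matrix.of fun _ ik => (1 : Matrix (Fin p) (Fin p) ℂ) ik.1 ik.2)).submatrix
      (fun s : Fin c => ((0 : Fin 1), s))
    rw [compress_eq_s3] at h1
    have h2 : conjBlk (Matrix.of fun i k => (1 : Matrix (Fin p) (Fin p) ℂ) i k) x = x := by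
      change conjBlk 1 x = x
      simp [conjBlk]
    simp only [Matrix.of_apply, h2] at h1
    exact h1
  · intro h x hx y hy α
    rw [compress_eq_s3]
    exact (h _ (hx.mul_mul_conjTranspose_same _) y hy).submatrix _
end
end

section
/- Let σ be a permutation of the three tensor factors and, for ξ ∈ ℂ^a ⊗ ℂ^b ⊗ ℂ^c, let ξ^σ denote the image of ξ under the corresponding flip (factor-permuting) isomorphism onto the σ-permuted triple tensor product. Then SR(ξ) = (α, β, γ) if and only if SR(ξ^σ) = (α, β, γ)^σ, where (α,β,γ)^σ is the triple (α,β,γ) with its entries permuted by σ. -/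
open Module

noncomputable section

abbrev EC (n : ℕ) := EuclideanSpace ℂ (Fin n)

/-- The coefficient matrices of ξ, as a linear map ℂ^a → M_{c×b}. -/
noncomputable def coefMat {a b c : ℕ} (ξ : Fin a → Fin b → Fin c → ℂ) :
    EC a →ₗ[ℂ] Matrix (Fin c) (Fin b) ℂ where
  toFun u := Matrix.of fun k j => ∑ i, ξ i j k * u i
  map_add' u u' := by
    ext k j
    simp [mul_add, Finset.sum_add_distrib]
  map_smul' r u := by
    ext k j
    simp [Finset.mul_sum]
    ring_nf
    simp [mul_comm, mul_left_comm]

/-- The linear map Λ_ξ : ℂ^a → L(ℂ^b, ℂ^c) associated to ξ ∈ ℂ^a ⊗ ℂ^b ⊗ ℂ^c,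
determined by (Λ_ξ(e_i)(e_j))_k = ξ_{i,j,k}. -/
noncomputable def Lam {a b c : ℕ} (ξ : Fin a → Fin b → Fin c → ℂ) :
    EC a →ₗ[ℂ] (EC b →ₗ[ℂ] EC c) :=
  (Matrix.toEuclideanLin.toLinearMap).comp (coefMat ξ)

/-- α_ξ : the rank of Λ_ξ. -/
noncomputable def alphaDim {a b c : ℕ} (ξ : Fin a → Fin b → Fin c → ℂ) : ℕ :=
  finrank ℂ (LinearMap.range (Lam ξ))

/-- β_ξ : the dimension of the span of the supports of all operators in the range of Λ_ξ. -/
noncomputable def betaDim {a b c : ℕ} (ξ : Fin a → Fin b → Fin c → ℂ) : ℕ :=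
  finrank ℂ (⨆ T ∈ LinearMap.range (Lam ξ), (LinearMap.ker T)ᗮ : Submodule ℂ (EC b))

/-- γ_ξ : the dimension of the span of the ranges of all operators in the range of Λ_ξ. -/
noncomputable def gammaDim {a b c : ℕ} (ξ : Fin a → Fin b → Fin c → ℂ) : ℕ :=
  finrank ℂ (⨆ T ∈ LinearMap.range (Lam ξ), LinearMap.range T : Submodule ℂ (EC c))

/-- Null space of the flattening of a 3-array along the first index. -/
def nulSp {n : ℕ} {ι κ : Type} (g : Fin n → ι → κ → ℂ) : Submodule ℂ (EC n) where
  carrier := {u | ∀ j k, ∑ i, g i j k * u i = 0}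
  add_mem' := by
    intro u v hu hv j k
    simp [mul_add, Finset.sum_add_distrib, hu j k, hv j k]
  zero_mem' := by
    intro j k
    simp
  smul_mem' := by
    intro r u hu j k
    have h := hu j k
    have : ∀ i, g i j k * (r • u) i = r * (g i j k * u i) := by
      intro i
      simp
      ring
    simp only [this, ← Finset.mul_sum, h, mul_zero]

theorem mem_nulSp {n : ℕ} {ι κ : Type} (g : Fin n → ι → κ → ℂ) (u : EC n) :
    u ∈ nulSp g ↔ ∀ j k, ∑ i, g i j k * u i = 0 := Iff.rfl

theorem nulSp_swap {n : ℕ} {ι κ : Type} (g : Fin n → ι → κ → ℂ) :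
    nulSp (fun i k j => g i j k) = nulSp g := by
  ext u
  simp only [mem_nulSp]
  exact forall_comm

theorem Lam_apply {a b c : ℕ} (ξ : Fin a → Fin b → Fin c → ℂ) (u : EC a) (v : EC b) (k : Fin c) :
    Lam ξ u v k = ∑ j, (∑ i, ξ i j k * u i) * v j := by
  simp [Lam, coefMat, Matrix.toLpLin_apply, Matrix.mulVec, dotProduct]

theorem Lam_single_left {a b c : ℕ} (ξ : Fin a → Fin b → Fin c → ℂ) (i : Fin a) (v : EC b)
    (k : Fin c) : Lam ξ (EuclideanSpace.single i 1) v k = ∑ j, ξ i j k * v j := by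
  rw [Lam_apply]
  simp [Pi.single_apply]

theorem Lam_single_right {a b c : ℕ} (ξ : Fin a → Fin b → Fin c → ℂ) (u : EC a) (j : Fin b)
    (k : Fin c) : Lam ξ u (EuclideanSpace.single j 1) k = ∑ i, ξ i j k * u i := by
  rw [Lam_apply]
  simp [Pi.single_apply]

theorem alpha_eq {a b c : ℕ} (ξ : Fin a → Fin b → Fin c → ℂ) :
    alphaDim ξ = a - finrank ℂ (nulSp ξ) := by
  have h := LinearMap.finrank_range_add_finrank_ker (Lam ξ)
  have hk : LinearMap.ker (Lam ξ) = nulSp ξ := by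
    ext u
    rw [LinearMap.mem_ker, mem_nulSp]
    constructor
    · intro h j k
      rw [← Lam_single_right, h]
      simp
    · intro h
      ext v k
      rw [Lam_apply]
      simp [h]
  rw [hk] at h
  simp only [finrank_euclideanSpace, Fintype.card_fin] at h
  unfold alphaDim
  omega

theorem beta_eq {a b c : ℕ} (ξ : Fin a → Fin b → Fin c → ℂ) :
    betaDim ξ = b - finrank ℂ (nulSp (fun j i k => ξ i j k)) := by
  have hk : (⨆ T ∈ LinearMap.range (Lam ξ), (LinearMap.ker T)ᗮ : Submodule ℂ (EC b))
      = (nulSp (fun j i k => ξ i j k))ᗮ := by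
    rw [← Submodule.orthogonal_orthogonal (⨆ T ∈ LinearMap.range (Lam ξ), (LinearMap.ker T)ᗮ)]
    congr 1
    rw [iSup_subtype', ← Submodule.iInf_orthogonal]
    simp only [Submodule.orthogonal_orthogonal]
    ext v
    simp only [Submodule.mem_iInf, Subtype.forall, LinearMap.mem_ker, mem_nulSp]
    constructor
    · intro h i k
      rw [← Lam_single_left, h _ ⟨_, rfl⟩]
      simp
    · rintro h _ ⟨u, rfl⟩
      ext k
      rw [Lam_apply]
      simp only [Finset.sum_mul]
      rw [Finset.sum_comm]
      have : ∀ i j, ξ i j k * u i * v j = u i * (ξ i j k * v j) := by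
        intro i j
        ring
      simp [this, ← Finset.mul_sum, h]
  have h := Submodule.finrank_add_finrank_orthogonal (nulSp (fun j i k => ξ i j k))
  rw [← hk] at h
  simp only [finrank_euclideanSpace, Fintype.card_fin] at h
  unfold betaDim
  omega

/-- The flattening matrix for the third index. -/
def gmat {a b c : ℕ} (ξ : Fin a → Fin b → Fin c → ℂ) : Matrix (Fin c) (Fin a × Fin b) ℂ :=
  Matrix.of fun k p => ξ p.1 p.2 k

theorem gamma_eq {a b c : ℕ} (ξ : Fin a → Fin b → Fin c → ℂ) :
    gammaDim ξ = c - finrank ℂ (nulSp (fun k i j => ξ i j k)) := by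
  let e : EC c ≃ₗ[ℂ] (Fin c → ℂ) := WithLp.linearEquiv 2 ℂ (Fin c → ℂ)
  have hcol : ∀ p : Fin a × Fin b, WithLp.toLp 2 ((gmat ξ).col p) =
      Lam ξ (EuclideanSpace.single p.1 1) (EuclideanSpace.single p.2 1) := by
    intro p
    ext k
    rw [Lam_single_left]
    simp [gmat, Pi.single_apply]
  have hk : (⨆ T ∈ LinearMap.range (Lam ξ), LinearMap.range T : Submodule ℂ (EC c)) =
      (LinearMap.range (gmat ξ).mulVecLin).map e.symm.toLinearMap := by
    apply le_antisymm
    · refine iSup₂_le ?_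
      rintro _ ⟨u, rfl⟩ _ ⟨v, rfl⟩
      refine ⟨_, ⟨fun p => u p.1 * v p.2, rfl⟩, ?_⟩
      ext k
      rw [Lam_apply]
      simp only [Finset.sum_mul]
      rw [Finset.sum_comm]
      simp [e, gmat, Matrix.mulVec, dotProduct, Fintype.sum_prod_type, mul_assoc]
    · rw [Matrix.range_mulVecLin, Submodule.map_span_le]
      rintro _ ⟨p, rfl⟩
      change WithLp.toLp 2 ((gmat ξ).col p) ∈ _
      rw [hcol]
      exact Submodule.mem_iSup_of_mem _ (Submodule.mem_iSup_of_mem ⟨_, rfl⟩ ⟨_, rfl⟩)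
  have h := LinearMap.finrank_range_add_finrank_ker (gmat ξ).transpose.mulVecLin
  have hn : (LinearMap.ker (gmat ξ).transpose.mulVecLin).map e.symm.toLinearMap
      = nulSp (fun k i j => ξ i j k) := by
    ext w
    rw [mem_nulSp]
    constructor
    · rintro ⟨w, hw, rfl⟩ i j
      have := congrFun (LinearMap.mem_ker.1 hw) (i, j)
      simpa [gmat, Matrix.vecMul, dotProduct, e, mul_comm] using this
    · intro hw
      refine ⟨e w, ?_, by simp⟩
      rw [SetLike.mem_coe, LinearMap.mem_ker]
      ext p
      simpa [gmat, Matrix.vecMul, dotProduct, e, mul_comm] using hw p.1 p.2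
  have h1 := LinearEquiv.finrank_map_eq e.symm (LinearMap.ker (gmat ξ).transpose.mulVecLin)
  have h2 := LinearEquiv.finrank_map_eq e.symm (LinearMap.range (gmat ξ).mulVecLin)
  have h3 : finrank ℂ (LinearMap.range (gmat ξ).transpose.mulVecLin) =
    finrank ℂ (LinearMap.range (gmat ξ).mulVecLin) := Matrix.rank_transpose (gmat ξ)
  erw [hn] at h1
  erw [← hk] at h2
  simp only [finrank_fintype_fun_eq_card, Fintype.card_fin] at h
  unfold gammaDim
  omega

theorem sr_ijk {a b c : ℕ} (ξ : Fin a → Fin b → Fin c → ℂ) :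
    alphaDim (fun i j k => ξ i j k) = alphaDim ξ ∧
    betaDim (fun i j k => ξ i j k) = betaDim ξ ∧
    gammaDim (fun i j k => ξ i j k) = gammaDim ξ := by
  have s12 := nulSp_swap ξ
  have s02 := nulSp_swap (fun j i k => ξ i j k)
  have s01 := nulSp_swap (fun k i j => ξ i j k)
  simp only [alpha_eq, beta_eq, gamma_eq]
  refine ⟨?_, ?_, ?_⟩ <;> first | trivial | rfl | rw [s12] | rw [s02] | rw [s01]

theorem sr_ikj {a b c : ℕ} (ξ : Fin a → Fin b → Fin c → ℂ) :
    alphaDim (fun i k j => ξ i j k) = alphaDim ξ ∧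
    betaDim (fun i k j => ξ i j k) = gammaDim ξ ∧
    gammaDim (fun i k j => ξ i j k) = betaDim ξ := by
  have s12 := nulSp_swap ξ
  have s02 := nulSp_swap (fun j i k => ξ i j k)
  have s01 := nulSp_swap (fun k i j => ξ i j k)
  simp only [alpha_eq, beta_eq, gamma_eq]
  refine ⟨?_, ?_, ?_⟩ <;> first | trivial | rfl | rw [s12] | rw [s02] | rw [s01]

theorem sr_jik {a b c : ℕ} (ξ : Fin a → Fin b → Fin c → ℂ) :
    alphaDim (fun j i k => ξ i j k) = betaDim ξ ∧
    betaDim (fun j i k => ξ i j k) = alphaDim ξ ∧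
    gammaDim (fun j i k => ξ i j k) = gammaDim ξ := by
  have s12 := nulSp_swap ξ
  have s02 := nulSp_swap (fun j i k => ξ i j k)
  have s01 := nulSp_swap (fun k i j => ξ i j k)
  simp only [alpha_eq, beta_eq, gamma_eq]
  refine ⟨?_, ?_, ?_⟩ <;> first | trivial | rfl | rw [s12] | rw [s02] | rw [s01]

theorem sr_jki {a b c : ℕ} (ξ : Fin a → Fin b → Fin c → ℂ) :
    alphaDim (fun j k i => ξ i j k) = betaDim ξ ∧
    betaDim (fun j k i => ξ i j k) = gammaDim ξ ∧
    gammaDim (fun j k i => ξ i j k) = alphaDim ξ := by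
  have s12 := nulSp_swap ξ
  have s02 := nulSp_swap (fun j i k => ξ i j k)
  have s01 := nulSp_swap (fun k i j => ξ i j k)
  simp only [alpha_eq, beta_eq, gamma_eq]
  refine ⟨?_, ?_, ?_⟩ <;> first | trivial | rfl | rw [s12] | rw [s02] | rw [s01]

theorem sr_kij {a b c : ℕ} (ξ : Fin a → Fin b → Fin c → ℂ) :
    alphaDim (fun k i j => ξ i j k) = gammaDim ξ ∧
    betaDim (fun k i j => ξ i j k) = alphaDim ξ ∧
    gammaDim (fun k i j => ξ i j k) = betaDim ξ := by
  have s12 := nulSp_swap ξ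
  have s02 := nulSp_swap (fun j i k => ξ i j k)
  have s01 := nulSp_swap (fun k i j => ξ i j k)
  simp only [alpha_eq, beta_eq, gamma_eq]
  refine ⟨?_, ?_, ?_⟩ <;> first | trivial | rfl | rw [s12] | rw [s02] | rw [s01]

theorem sr_kji {a b c : ℕ} (ξ : Fin a → Fin b → Fin c → ℂ) :
    alphaDim (fun k j i => ξ i j k) = gammaDim ξ ∧
    betaDim (fun k j i => ξ i j k) = betaDim ξ ∧
    gammaDim (fun k j i => ξ i j k) = alphaDim ξ := by
  have s12 := nulSp_swap ξ
  have s02 := nulSp_swap (fun j i k => ξ i j k)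
  have s01 := nulSp_swap (fun k i j => ξ i j k)
  simp only [alpha_eq, beta_eq, gamma_eq]
  refine ⟨?_, ?_, ?_⟩ <;> first | trivial | rfl | rw [s12] | rw [s02] | rw [s01]

/-- Corollary "permutation": for a permutation σ of the three tensor factors, if ξ' is
the image of ξ under the flip isomorphism associated to σ (so that the m-th factor of
ξ' is the σ⁻¹(m)-th factor of ξ, expressed by the coordinate identity below), then
SR(ξ) = (α,β,γ) iff SR(ξ') = (α,β,γ)^σ.  Dimensions are encoded by d : Fin 3 → ℕ and
the triple (α,β,γ) by t : Fin 3 → ℕ. -/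
theorem stmt7 (d : Fin 3 → ℕ) (σ : Equiv.Perm (Fin 3)) (t : Fin 3 → ℕ)
    (ξ : Fin (d 0) → Fin (d 1) → Fin (d 2) → ℂ)
    (ξ' : Fin (d (σ⁻¹ 0)) → Fin (d (σ⁻¹ 1)) → Fin (d (σ⁻¹ 2)) → ℂ)
    (hflip : ∀ x : (m : Fin 3) → Fin (d m),
      ξ' (x (σ⁻¹ 0)) (x (σ⁻¹ 1)) (x (σ⁻¹ 2)) = ξ (x 0) (x 1) (x 2)) :
    (alphaDim ξ = t 0 ∧ betaDim ξ = t 1 ∧ gammaDim ξ = t 2) ↔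
    (alphaDim ξ' = t (σ⁻¹ 0) ∧ betaDim ξ' = t (σ⁻¹ 1) ∧ gammaDim ξ' = t (σ⁻¹ 2)) := by
  have h01 : σ⁻¹ 0 ≠ σ⁻¹ 1 := fun h => absurd (σ⁻¹.injective h) (by decide)
  have h02 : σ⁻¹ 0 ≠ σ⁻¹ 2 := fun h => absurd (σ⁻¹.injective h) (by decide)
  have h12 : σ⁻¹ 1 ≠ σ⁻¹ 2 := fun h => absurd (σ⁻¹.injective h) (by decide)
  generalize σ⁻¹ 0 = p at *
  generalize σ⁻¹ 1 = q at *
  generalize σ⁻¹ 2 = r at *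
  have hf : ∀ (i : Fin (d 0)) (j : Fin (d 1)) (k : Fin (d 2)),
      ∃ x : (m : Fin 3) → Fin (d m), x 0 = i ∧ x 1 = j ∧ x 2 = k := by
    intro i j k
    exact ⟨Fin.cons i (Fin.cons j (Fin.cons k finZeroElim)), rfl, rfl, rfl⟩
  have key : ∀ x : (m : Fin 3) → Fin (d m), ∀ i j k, x 0 = i → x 1 = j → x 2 = k →
      ξ' (x p) (x q) (x r) = ξ i j k := by
    rintro x _ _ _ rfl rfl rfl
    exact hflip x
  clear hflip
  fin_cases p <;> fin_cases q <;> fin_cases r <;>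
    first
    | exact absurd rfl h01
    | exact absurd rfl h02
    | exact absurd rfl h12
    | skip
  · have e : ξ' = fun i j k => ξ i j k := by
      funext i j k
      obtain ⟨x, h0, h1, h2⟩ := hf i j k
      have := key x i j k h0 h1 h2
      subst h0 h1 h2
      exact this
    subst e
    obtain ⟨h0, h1, h2⟩ := sr_ijk ξ
    change _ ↔ (alphaDim (fun i j k => ξ i j k) = t 0 ∧ betaDim (fun i j k => ξ i j k) = t 1 ∧
      gammaDim (fun i j k => ξ i j k) = t 2)
    rw [h0, h1, h2]
    try tauto
  · have e : ξ' = fun i k j => ξ i j k := by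
      funext i k j
      obtain ⟨x, h0, h1, h2⟩ := hf i j k
      have := key x i j k h0 h1 h2
      subst h0 h1 h2
      exact this
    subst e
    obtain ⟨h0, h1, h2⟩ := sr_ikj ξ
    change _ ↔ (alphaDim (fun i k j => ξ i j k) = t 0 ∧ betaDim (fun i k j => ξ i j k) = t 2 ∧
      gammaDim (fun i k j => ξ i j k) = t 1)
    rw [h0, h1, h2]
    try tauto
  · have e : ξ' = fun j i k => ξ i j k := by
      funext j i k
      obtain ⟨x, h0, h1, h2⟩ := hf i j k
      have := key x i j k h0 h1 h2
      subst h0 h1 h2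
      exact this
    subst e
    obtain ⟨h0, h1, h2⟩ := sr_jik ξ
    change _ ↔ (alphaDim (fun j i k => ξ i j k) = t 1 ∧ betaDim (fun j i k => ξ i j k) = t 0 ∧
      gammaDim (fun j i k => ξ i j k) = t 2)
    rw [h0, h1, h2]
    try tauto
  · have e : ξ' = fun j k i => ξ i j k := by
      funext j k i
      obtain ⟨x, h0, h1, h2⟩ := hf i j k
      have := key x i j k h0 h1 h2
      subst h0 h1 h2
      exact this
    subst e
    obtain ⟨h0, h1, h2⟩ := sr_jki ξ
    change _ ↔ (alphaDim (fun j k i => ξ i j k) = t 1 ∧ betaDim (fun j k i => ξ i j k) = t 2 ∧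
      gammaDim (fun j k i => ξ i j k) = t 0)
    rw [h0, h1, h2]
    try tauto
  · have e : ξ' = fun k i j => ξ i j k := by
      funext k i j
      obtain ⟨x, h0, h1, h2⟩ := hf i j k
      have := key x i j k h0 h1 h2
      subst h0 h1 h2
      exact this
    subst e
    obtain ⟨h0, h1, h2⟩ := sr_kij ξ
    change _ ↔ (alphaDim (fun k i j => ξ i j k) = t 2 ∧ betaDim (fun k i j => ξ i j k) = t 0 ∧
      gammaDim (fun k i j => ξ i j k) = t 1)
    rw [h0, h1, h2]
    try tauto
  · have e : ξ' = fun k j i => ξ i j k := by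
      funext k j i
      obtain ⟨x, h0, h1, h2⟩ := hf i j k
      have := key x i j k h0 h1 h2
      subst h0 h1 h2
      exact this
    subst e
    obtain ⟨h0, h1, h2⟩ := sr_kji ξ
    change _ ↔ (alphaDim (fun k j i => ξ i j k) = t 2 ∧ betaDim (fun k j i => ξ i j k) = t 1 ∧
      gammaDim (fun k j i => ξ i j k) = t 0)
    rw [h0, h1, h2]
    try tauto
end
end

section
/- Let σ be a permutation of the three labels A, B, C (with associated sizes a, b, c), and let φ : M_a × M_b → M_c be a ℂ-bilinear map. Let φ^σ : M_{σA} × M_{σB} → M_{σC} be the unique bilinear map satisfying Tr(φ^σ(x_{σA}, x_{σB}) x_{σC}^T) = Tr(φ(x_A, x_B) x_C^T) for all x_A ∈ M_a, x_B ∈ M_b, x_C ∈ M_c. Then φ is (p,q,r)-positive if and only if φ^σ is (p,q,r)^σ-positive, where (p,q,r)^σ is the triple obtained by permuting (p,q,r) according to σ. -/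
open Matrix Kronecker ComplexOrder

noncomputable section

theorem psd_of_quad {n : Type*} [Fintype n] [DecidableEq n] (C : Matrix n n ℂ)
    (h : ∀ z : n → ℂ, 0 ≤ star z ⬝ᵥ (C *ᵥ z)) : C.PosSemidef := by
  rw [← Matrix.isPositive_toEuclideanLin_iff, LinearMap.isPositive_iff_complex]
  intro z
  have h1 := h z.ofLp
  have h2 : inner ℂ (Matrix.toEuclideanLin C z) z = star (star z.ofLp ⬝ᵥ (C *ᵥ z.ofLp)) := by
    rw [EuclideanSpace.inner_eq_star_dotProduct, Matrix.star_dotProduct, star_star,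
      dotProduct_comm]
    rfl
  rw [h2]
  obtain ⟨h3, h4⟩ := Complex.nonneg_iff.mp h1
  refine ⟨?_, ?_⟩
  · apply Complex.ext
    · simp
    · simp only [RCLike.re_to_complex, Complex.ofReal_im, Complex.star_def, Complex.conj_im]
      rw [← h4]; simp
  · simpa using h3

theorem psd_iff_pair {n : Type*} [Fintype n] [DecidableEq n] (C : Matrix n n ℂ) :
    C.PosSemidef ↔ ∀ w : Matrix n n ℂ, w.PosSemidef → 0 ≤ ∑ u, ∑ v, C u v * w u v := by
  constructor
  · intro hC w hw
    have := (hC.hadamard hw).dotProduct_mulVec_nonneg (fun _ => 1)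
    simpa [dotProduct, mulVec, Matrix.hadamard] using this
  · intro h
    apply psd_of_quad
    intro z
    have := h _ (Matrix.posSemidef_vecMulVec_star_self z)
    convert this using 1
    simp only [dotProduct, mulVec, vecMulVec_apply, Finset.mul_sum]
    refine Finset.sum_congr rfl fun u _ => Finset.sum_congr rfl fun v _ => ?_
    ring

def sumEquiv (P G S : Type*) : ((G × S) × (G × S)) × (P × P) ≃ ((P × G) × (P × G)) × (S × S) where
  toFun x := (((x.2.1, x.1.1.1), (x.2.2, x.1.2.1)), (x.1.1.2, x.1.2.2))
  invFun x := (((x.1.1.2, x.2.1), (x.1.2.2, x.2.2)), (x.1.1.1, x.1.2.1))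
  left_inv _ := rfl
  right_inv _ := rfl

theorem key_identity {a b c p q r : ℕ} (φ : Mat a →ₗ[ℂ] Mat b →ₗ[ℂ] Mat c)
    (x : Matrix (Fin p × Fin a) (Fin p × Fin a) ℂ)
    (y : Matrix (Fin q × Fin b) (Fin q × Fin b) ℂ)
    (w : Matrix (Fin r × Fin c) (Fin r × Fin c) ℂ)
    (α : Matrix (Fin r) (Fin p × Fin q) ℂ) :
    ∑ u, ∑ v, compress α (ampl φ x y) u v * w u v =
      ∑ i : (Fin p × Fin q) × Fin r, ∑ j : (Fin p × Fin q) × Fin r,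
        α i.2 i.1 * (starRingEnd ℂ) (α j.2 j.1) *
        (φ (blk x i.1.1 j.1.1) (blk y i.1.2 j.1.2) * (blk w i.2 j.2)ᵀ).trace := by
  have hl : ∑ u, ∑ v, compress α (ampl φ x y) u v * w u v =
      ∑ z : ((Fin r × Fin c) × (Fin r × Fin c)) × ((Fin p × Fin q) × (Fin p × Fin q)),
        α z.1.1.1 z.2.1 * (starRingEnd ℂ) (α z.1.2.1 z.2.2) *
          ampl φ x y (z.2.1, z.1.1.2) (z.2.2, z.1.2.2) * w z.1.1 z.1.2 := by
    conv_rhs => rw [Fintype.sum_prod_type, Fintype.sum_prod_type]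
    refine Finset.sum_congr rfl fun u _ => Finset.sum_congr rfl fun v _ => ?_
    conv_rhs => rw [Fintype.sum_prod_type]
    simp only [compress, Matrix.of_apply, Finset.sum_mul]
  have hr : ∑ i : (Fin p × Fin q) × Fin r, ∑ j : (Fin p × Fin q) × Fin r,
        α i.2 i.1 * (starRingEnd ℂ) (α j.2 j.1) *
        (φ (blk x i.1.1 j.1.1) (blk y i.1.2 j.1.2) * (blk w i.2 j.2)ᵀ).trace =
      ∑ z : (((Fin p × Fin q) × Fin r) × ((Fin p × Fin q) × Fin r)) × (Fin c × Fin c),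
        α z.1.1.2 z.1.1.1 * (starRingEnd ℂ) (α z.1.2.2 z.1.2.1) *
        (φ (blk x z.1.1.1.1 z.1.2.1.1) (blk y z.1.1.1.2 z.1.2.1.2) z.2.1 z.2.2 *
          w (z.1.1.2, z.2.1) (z.1.2.2, z.2.2)) := by
    conv_rhs => rw [Fintype.sum_prod_type, Fintype.sum_prod_type]
    refine Finset.sum_congr rfl fun u _ => Finset.sum_congr rfl fun v _ => ?_
    conv_rhs => rw [Fintype.sum_prod_type]
    simp only [Matrix.trace, Matrix.diag, Matrix.mul_apply, Matrix.transpose_apply, blk,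
      Matrix.of_apply, Finset.mul_sum]
  rw [hl, hr]
  refine Fintype.sum_equiv (sumEquiv _ _ _) _ _ fun z => ?_
  simp only [sumEquiv, Equiv.coe_fn_mk, ampl, Matrix.of_apply]
  ring

theorem pos_iff_form {a b c p q r : ℕ} (φ : Mat a →ₗ[ℂ] Mat b →ₗ[ℂ] Mat c) :
    IsPQRPos φ p q r ↔
    ∀ (x : Matrix (Fin p × Fin a) (Fin p × Fin a) ℂ), x.PosSemidef →
    ∀ (y : Matrix (Fin q × Fin b) (Fin q × Fin b) ℂ), y.PosSemidef →
    ∀ (w : Matrix (Fin r × Fin c) (Fin r × Fin c) ℂ), w.PosSemidef →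
    ∀ (β : (Fin p × Fin q) × Fin r → ℂ), 0 ≤
      ∑ i : (Fin p × Fin q) × Fin r, ∑ j : (Fin p × Fin q) × Fin r,
        β i * (starRingEnd ℂ) (β j) *
        (φ (blk x i.1.1 j.1.1) (blk y i.1.2 j.1.2) * (blk w i.2 j.2)ᵀ).trace := by
  constructor
  · intro h x hx y hy w hw β
    have := (psd_iff_pair _).1 (h x hx y hy (Matrix.of fun g ik => β (ik, g))) w hw
    rw [key_identity] at this
    exact this
  · intro h x hx y hy α
    rw [psd_iff_pair]
    intro w hw
    rw [key_identity]
    exact h x hx y hy w hw (fun i => α i.2 i.1)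

def SymPos (d t : Fin 3 → ℕ) (T : ((m : Fin 3) → Mat (d m)) → ℂ) : Prop :=
  ∀ X : (m : Fin 3) → Matrix (Fin (t m) × Fin (d m)) (Fin (t m) × Fin (d m)) ℂ,
    (∀ m, (X m).PosSemidef) → ∀ β : ((m : Fin 3) → Fin (t m)) → ℂ,
    0 ≤ ∑ i, ∑ j, β i * (starRingEnd ℂ) (β j) * T (fun m => blk (X m) (i m) (j m))

def tri {P : Fin 3 → Type*} (x : P 0) (y : P 1) (z : P 2) : (m : Fin 3) → P m
  | 0 => x
  | 1 => y
  | 2 => z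

def triEquiv (P : Fin 3 → Type*) : ((m : Fin 3) → P m) ≃ (P 0 × P 1) × P 2 where
  toFun f := ((f 0, f 1), f 2)
  invFun x := tri x.1.1 x.1.2 x.2
  left_inv f := by
    funext m
    fin_cases m <;> rfl
  right_inv _ := rfl

theorem pos_iff_sym (d t : Fin 3 → ℕ) (φ : Mat (d 0) →ₗ[ℂ] Mat (d 1) →ₗ[ℂ] Mat (d 2)) :
    IsPQRPos φ (t 0) (t 1) (t 2) ↔
      SymPos d t (fun x => (φ (x 0) (x 1) * (x 2)ᵀ).trace) := by
  rw [pos_iff_form]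
  constructor
  · intro h X hX β
    have := h (X 0) (hX 0) (X 1) (hX 1) (X 2) (hX 2)
      (fun i => β ((triEquiv (fun m => Fin (t m))).symm i))
    refine this.trans_eq ?_
    refine Fintype.sum_equiv (triEquiv (fun m => Fin (t m))).symm _ _ fun i => ?_
    refine Fintype.sum_equiv (triEquiv (fun m => Fin (t m))).symm _ _ fun j => ?_
    rfl
  · intro h x hx y hy w hw β
    have := h (tri x y w) (by intro m; fin_cases m <;> assumption)
      (fun i => β (triEquiv (fun m => Fin (t m)) i))
    refine this.trans_eq ?_
    refine Fintype.sum_equiv (triEquiv (fun m => Fin (t m))) _ _ fun i => ?_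
    refine Fintype.sum_equiv (triEquiv (fun m => Fin (t m))) _ _ fun j => ?_
    rfl

theorem sym_perm (d t : Fin 3 → ℕ) (σ : Equiv.Perm (Fin 3)) (T : ((m : Fin 3) → Mat (d m)) → ℂ)
    (S : ((m : Fin 3) → Mat (d (σ m))) → ℂ) (h : ∀ x, S (fun m => x (σ m)) = T x) :
    SymPos d t T ↔ SymPos (fun m => d (σ m)) (fun m => t (σ m)) S := by
  let e : ((m : Fin 3) → Fin (t (σ m))) ≃ ((m : Fin 3) → Fin (t m)) :=
    Equiv.piCongrLeft (fun m => Fin (t m)) σ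
  have he : ∀ (i) (m : Fin 3), e.symm i m = i (σ m) := fun i m => rfl
  have key : ∀ (X : (m : Fin 3) → Matrix (Fin (t m) × Fin (d m)) (Fin (t m) × Fin (d m)) ℂ)
      (β : ((m : Fin 3) → Fin (t m)) → ℂ),
      ∑ i, ∑ j, β i * (starRingEnd ℂ) (β j) * T (fun m => blk (X m) (i m) (j m)) =
      ∑ i, ∑ j, β (e i) * (starRingEnd ℂ) (β (e j)) *
        S (fun m => blk (X (σ m)) (i m) (j m)) := by
    intro X β
    refine Fintype.sum_equiv e.symm _ _ fun i => ?_
    refine Fintype.sum_equiv e.symm _ _ fun j => ?_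
    rw [e.apply_symm_apply, e.apply_symm_apply, ← h]
    rfl
  constructor
  · intro hT Y hY β
    obtain ⟨X, rfl⟩ : ∃ X : (m : Fin 3) →
        Matrix (Fin (t m) × Fin (d m)) (Fin (t m) × Fin (d m)) ℂ, (fun m => X (σ m)) = Y :=
      (Equiv.piCongrLeft (fun m => Matrix (Fin (t m) × Fin (d m)) (Fin (t m) × Fin (d m)) ℂ)
        σ).symm.surjective Y
    have := hT X (fun m => by obtain ⟨k, rfl⟩ := σ.surjective m; exact hY k) (fun i => β (e.symm i))
    rw [key] at this
    simpa only [e.symm_apply_apply] using this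
  · intro hS X hX β
    rw [key]
    exact hS (fun m => X (σ m)) (fun m => hX _) (fun i => β (e i))

/-- Corollary "dual-per": with the three labels encoded by Fin 3, dimensions d : Fin 3 → ℕ
and indices t : Fin 3 → ℕ, if ψ = φ^σ is the bilinear map determined by the trace pairing
identity Tr(φ^σ(x_{σA}, x_{σB}) x_{σC}ᵀ) = Tr(φ(x_A, x_B) x_Cᵀ), then φ is
(t 0, t 1, t 2)-positive iff φ^σ is (t 0, t 1, t 2)^σ-positive. -/
theorem stmt12 (d : Fin 3 → ℕ) (σ : Equiv.Perm (Fin 3)) (t : Fin 3 → ℕ)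
    (φ : Mat (d 0) →ₗ[ℂ] Mat (d 1) →ₗ[ℂ] Mat (d 2))
    (ψ : Mat (d (σ 0)) →ₗ[ℂ] Mat (d (σ 1)) →ₗ[ℂ] Mat (d (σ 2)))
    (hψ : ∀ x : (m : Fin 3) → Mat (d m),
      (ψ (x (σ 0)) (x (σ 1)) * (x (σ 2))ᵀ).trace = (φ (x 0) (x 1) * (x 2)ᵀ).trace) :
    IsPQRPos φ (t 0) (t 1) (t 2) ↔ IsPQRPos ψ (t (σ 0)) (t (σ 1)) (t (σ 2)) := by
  rw [pos_iff_sym]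
  refine Iff.trans ?_ (pos_iff_sym (fun m => d (σ m)) (fun m => t (σ m)) ψ).symm
  exact sym_perm d t σ _ _ hψ
end
end

section
/- Let φ : M_a × M_b → M_c be a ℂ-bilinear map and fix q,r ∈ ℕ. The following are equivalent: (i) φ is (p,q,r)-positive for all p ∈ ℕ; (ii) φ is (p,q,r)-positive for some p ≥ qr; (iii) φ is (qr,q,r)-positive. Moreover, the analogous equivalences hold with the roles of the three indices permuted, i.e., for fixed p,r ∈ ℕ: φ is (p,q,r)-positive for all q iff for some q ≥ pr iff for q = pr. -/
open Matrix Kronecker ComplexOrder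

noncomputable section

/-- Compression of the first amplification by a scalar matrix. -/
def pullX {p P a : ℕ} (V : Matrix (Fin p) (Fin P) ℂ)
    (x : Matrix (Fin p × Fin a) (Fin p × Fin a) ℂ) :
    Matrix (Fin P × Fin a) (Fin P × Fin a) ℂ :=
  Matrix.of fun u v => ∑ i, ∑ j, V i u.1 * (starRingEnd ℂ) (V j v.1) * x (i, u.2) (j, v.2)

theorem pullX_pos {p P a : ℕ} (V : Matrix (Fin p) (Fin P) ℂ)
    (x : Matrix (Fin p × Fin a) (Fin p × Fin a) ℂ) (hx : x.PosSemidef) :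
    (pullX V x).PosSemidef := by
  let W : Matrix (Fin p × Fin a) (Fin P × Fin a) ℂ :=
    Matrix.of fun u v => if u.2 = v.2 then (starRingEnd ℂ) (V u.1 v.1) else 0
  have h : pullX V x = Wᴴ * x * W := by
    ext ⟨m, s⟩ ⟨n, t⟩
    simp only [pullX, W, Matrix.mul_apply, Matrix.of_apply, Matrix.conjTranspose_apply,
      Fintype.sum_prod_type, apply_ite star, star_zero, ite_mul, mul_ite, zero_mul, mul_zero,
      Finset.sum_ite_eq', Finset.mem_univ, if_true, RCLike.star_def,
      Complex.conj_conj, Finset.sum_mul]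
    rw [Finset.sum_comm]
    refine Finset.sum_congr rfl fun j _ => Finset.sum_congr rfl fun i _ => ?_
    ring
  rw [h]
  exact hx.conjTranspose_mul_mul_same W

theorem blk_pullX {p P a : ℕ} (V : Matrix (Fin p) (Fin P) ℂ)
    (x : Matrix (Fin p × Fin a) (Fin p × Fin a) ℂ) (m n : Fin P) :
    blk (pullX V x) m n = ∑ i, ∑ j, (V i m * (starRingEnd ℂ) (V j n)) • blk x i j := by
  ext s t
  simp [blk, pullX, Matrix.sum_apply]

theorem compress_pullX {a b c p P q r : ℕ} (φ : Mat a →ₗ[ℂ] Mat b →ₗ[ℂ] Mat c)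
    (V : Matrix (Fin p) (Fin P) ℂ) (β : Matrix (Fin r) (Fin P × Fin q) ℂ)
    (α : Matrix (Fin r) (Fin p × Fin q) ℂ)
    (h : ∀ s i k, α s (i, k) = ∑ m, V i m * β s (m, k))
    (x : Matrix (Fin p × Fin a) (Fin p × Fin a) ℂ)
    (y : Matrix (Fin q × Fin b) (Fin q × Fin b) ℂ) :
    compress α (ampl φ x y) = compress β (ampl φ (pullX V x) y) := by
  ext ⟨s, u⟩ ⟨t, v⟩
  have e1 : ∀ (m n : Fin P) (k l : Fin q), φ (blk (pullX V x) m n) (blk y k l) u v =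
      ∑ i, ∑ j, (V i m * (starRingEnd ℂ) (V j n)) * φ (blk x i j) (blk y k l) u v := by
    intro m n k l
    rw [blk_pullX]
    simp [Matrix.sum_apply, LinearMap.sum_apply]
  simp only [compress, ampl, Matrix.of_apply, Fintype.sum_prod_type, e1, h, map_sum, map_mul]
  -- both sides are sums over k, l, i, j, m, n
  have L : ∀ F : Fin p → Fin q → Fin p → Fin q → Fin P → Fin P → ℂ,
      ∑ i, ∑ k, ∑ j, ∑ l, ∑ m, ∑ n, F i k j l m n =
      ∑ m, ∑ k, ∑ n, ∑ l, ∑ i, ∑ j, F i k j l m n := by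
    intro F
    let e : Fin p × Fin q × Fin p × Fin q × Fin P × Fin P ≃
        Fin P × Fin q × Fin P × Fin q × Fin p × Fin p :=
      ⟨fun z => (z.2.2.2.2.1, z.2.1, z.2.2.2.2.2, z.2.2.2.1, z.1, z.2.2.1),
       fun z => (z.2.2.2.2.1, z.2.1, z.2.2.2.2.2, z.2.2.2.1, z.1, z.2.2.1),
       fun _ => rfl, fun _ => rfl⟩
    have key := Fintype.sum_equiv e
      (fun z => F z.1 z.2.1 z.2.2.1 z.2.2.2.1 z.2.2.2.2.1 z.2.2.2.2.2)
      (fun z => F z.2.2.2.2.1 z.2.1 z.2.2.2.2.2 z.2.2.2.1 z.1 z.2.2.1) (fun _ => rfl)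
    simpa only [Fintype.sum_prod_type] using key
  simp only [Finset.sum_mul, Finset.mul_sum]
  rw [← L]
  refine Finset.sum_congr rfl fun i _ => Finset.sum_congr rfl fun k _ =>
    Finset.sum_congr rfl fun j _ => Finset.sum_congr rfl fun l _ => ?_
  rw [Finset.sum_comm]
  refine Finset.sum_congr rfl fun m _ => Finset.sum_congr rfl fun n _ => ?_
  ring

theorem pos_of_le {a b c : ℕ} (φ : Mat a →ₗ[ℂ] Mat b →ₗ[ℂ] Mat c) (P q r : ℕ)
    (hP : q * r ≤ P) (h : IsPQRPos φ P q r) (p : ℕ) : IsPQRPos φ p q r := by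
  intro x hx y hy α
  let e : Fin q × Fin r → Fin P := fun z => Fin.castLE hP (finProdFinEquiv z)
  have he : Function.Injective e :=
    (Fin.castLE_injective hP).comp finProdFinEquiv.injective
  let V : Matrix (Fin p) (Fin P) ℂ :=
    Matrix.of fun i m => ∑ z : Fin q × Fin r, if e z = m then α z.2 (i, z.1) else 0
  let β : Matrix (Fin r) (Fin P × Fin q) ℂ :=
    Matrix.of fun s mk => if e (mk.2, s) = mk.1 then 1 else 0
  rw [compress_pullX φ V β α ?_ x y]
  · exact h _ (pullX_pos V x hx) y hy β
  · intro s i k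
    simp [V, β, he.eq_iff]

theorem pos_flip {a b c : ℕ} (φ : Mat a →ₗ[ℂ] Mat b →ₗ[ℂ] Mat c) (p q r : ℕ)
    (h : IsPQRPos φ p q r) : IsPQRPos φ.flip q p r := by
  intro y hy x hx α
  have := h x hx y hy (Matrix.of fun s ik => α s ik.swap)
  convert this using 1
  ext u v
  simp only [compress, ampl, Matrix.of_apply, LinearMap.flip_apply]
  refine Fintype.sum_equiv (Equiv.prodComm _ _) _ _ fun ki => ?_
  refine Fintype.sum_equiv (Equiv.prodComm _ _) _ _ fun lj => ?_
  rfl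

theorem pos_of_le' {a b c : ℕ} (φ : Mat a →ₗ[ℂ] Mat b →ₗ[ℂ] Mat c) (p Q r : ℕ)
    (hQ : p * r ≤ Q) (h : IsPQRPos φ p Q r) (q : ℕ) : IsPQRPos φ p q r :=
  pos_flip φ.flip q p r (pos_of_le φ.flip Q p r hQ (pos_flip φ p Q r h) q)

/-- For fixed q, r: φ is (p,q,r)-positive for all p iff for some p ≥ qr iff for p = qr;
and the analogous equivalences with the roles of the indices permuted (fixed p, r). -/
theorem stmt13 {a b c : ℕ} (φ : Mat a →ₗ[ℂ] Mat b →ₗ[ℂ] Mat c) :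
    (∀ q r : ℕ,
      ((∀ p : ℕ, IsPQRPos φ p q r) ↔ (∃ p : ℕ, q * r ≤ p ∧ IsPQRPos φ p q r)) ∧
      ((∀ p : ℕ, IsPQRPos φ p q r) ↔ IsPQRPos φ (q * r) q r)) ∧
    (∀ p r : ℕ,
      ((∀ q : ℕ, IsPQRPos φ p q r) ↔ (∃ q : ℕ, p * r ≤ q ∧ IsPQRPos φ p q r)) ∧
      ((∀ q : ℕ, IsPQRPos φ p q r) ↔ IsPQRPos φ p (p * r) r)) := by
  refine ⟨fun q r => ⟨⟨fun h => ⟨q * r, le_rfl, h _⟩, fun ⟨P, hP, h⟩ => pos_of_le φ P q r hP h⟩,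
      ⟨fun h => h _, pos_of_le φ _ q r le_rfl⟩⟩,
    fun p r => ⟨⟨fun h => ⟨p * r, le_rfl, h _⟩, fun ⟨Q, hQ, h⟩ => pos_of_le' φ p Q r hQ h⟩,
      ⟨fun h => h _, pos_of_le' φ p _ r le_rfl⟩⟩⟩
end
end

section
/- Let φ : M_a × M_b → M_c be a ℂ-bilinear map and let D_φ : M_{ab} → M_c be its linearization, the linear map determined by D_φ(x ⊗ y) = φ(x,y) under the identification M_a ⊗ M_b ≅ M_{ab}. Then for each r ∈ ℕ, φ is (a,b,r)-positive if and only if D_φ is r-positive. -/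
open Matrix Kronecker ComplexOrder

noncomputable section

/-- The s-fold ampliation of a map between matrix spaces, applied to an s×s block
matrix. -/
def linAmpl {m n : Type*} (ψ : Matrix m m ℂ → Matrix n n ℂ) {s : ℕ}
    (x : Matrix (Fin s × m) (Fin s × m) ℂ) : Matrix (Fin s × n) (Fin s × n) ℂ :=
  Matrix.of fun u v => ψ (Matrix.of fun e f => x (u.1, e) (v.1, f)) u.2 v.2

/-- A map between matrix spaces is s-positive if its s-fold ampliation preserves
positive semidefiniteness. -/
def LinPos {m n : Type*} [Fintype m] [Fintype n] (ψ : Matrix m m ℂ → Matrix n n ℂ)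
    (s : ℕ) : Prop :=
  ∀ (x : Matrix (Fin s × m) (Fin s × m) ℂ), x.PosSemidef → (linAmpl ψ x).PosSemidef

def zmat {a b p q r : ℕ} (α : Matrix (Fin r) (Fin p × Fin q) ℂ)
    (x : Matrix (Fin p × Fin a) (Fin p × Fin a) ℂ)
    (y : Matrix (Fin q × Fin b) (Fin q × Fin b) ℂ) :
    Matrix (Fin r × (Fin a × Fin b)) (Fin r × (Fin a × Fin b)) ℂ :=
  Matrix.of fun u v => ∑ ik : Fin p × Fin q, ∑ jl : Fin p × Fin q,
    α u.1 ik * (starRingEnd ℂ) (α v.1 jl) *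
      (x (ik.1, u.2.1) (jl.1, v.2.1) * y (ik.2, u.2.2) (jl.2, v.2.2))

theorem compress_eq_s15 {a b c p q r : ℕ} (φ : Mat a →ₗ[ℂ] Mat b →ₗ[ℂ] Mat c)
    (D : Matrix (Fin a × Fin b) (Fin a × Fin b) ℂ →ₗ[ℂ] Mat c)
    (hD : ∀ (x : Mat a) (y : Mat b), D (x ⊗ₖ y) = φ x y)
    (α : Matrix (Fin r) (Fin p × Fin q) ℂ)
    (x : Matrix (Fin p × Fin a) (Fin p × Fin a) ℂ)
    (y : Matrix (Fin q × Fin b) (Fin q × Fin b) ℂ) :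
    compress α (ampl φ x y) = linAmpl (⇑D) (zmat α x y) := by
  ext u v
  have h : (Matrix.of fun e f => zmat α x y (u.1, e) (v.1, f)) =
      ∑ ik : Fin p × Fin q, ∑ jl : Fin p × Fin q,
        (α u.1 ik * (starRingEnd ℂ) (α v.1 jl)) • (blk x ik.1 jl.1 ⊗ₖ blk y ik.2 jl.2) := by
    ext e f
    simp [zmat, Matrix.sum_apply, blk, Matrix.kroneckerMap_apply]
  simp only [linAmpl, Matrix.of_apply]
  rw [h]
  simp [compress, ampl, map_sum, hD, Matrix.sum_apply]

theorem zmat_pos {a b p q r : ℕ} (α : Matrix (Fin r) (Fin p × Fin q) ℂ)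
    (x : Matrix (Fin p × Fin a) (Fin p × Fin a) ℂ) (hx : x.PosSemidef)
    (y : Matrix (Fin q × Fin b) (Fin q × Fin b) ℂ) (hy : y.PosSemidef) :
    (zmat α x y).PosSemidef := by
  let W : Matrix (Fin r × (Fin a × Fin b)) ((Fin p × Fin q) × (Fin a × Fin b)) ℂ :=
    Matrix.of fun u w => if u.2 = w.2 then α u.1 w.1 else 0
  let K : Matrix ((Fin p × Fin q) × (Fin a × Fin b)) ((Fin p × Fin q) × (Fin a × Fin b)) ℂ :=
    (x ⊗ₖ y).submatrix (fun w => ((w.1.1, w.2.1), (w.1.2, w.2.2)))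
      (fun w => ((w.1.1, w.2.1), (w.1.2, w.2.2)))
  have hK : K.PosSemidef := (hx.kronecker hy).submatrix _
  have h : zmat α x y = W * K * Wᴴ := by
    ext u v
    simp only [zmat, Matrix.of_apply, Matrix.mul_apply, Matrix.conjTranspose_apply, W, K,
      Matrix.submatrix_apply, Matrix.kroneckerMap_apply, apply_ite star, star_zero,
      Fintype.sum_prod_type (α₁ := Fin p × Fin q), Finset.sum_mul, ite_mul, zero_mul, mul_ite,
      mul_zero, Finset.sum_ite_eq, Finset.mem_univ, if_true]
    rw [Finset.sum_comm]
    refine Finset.sum_congr rfl fun i _ => Finset.sum_congr rfl fun j _ => ?_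
    rw [starRingEnd_apply]
    ring
  rw [h]
  exact hK.mul_mul_conjTranspose_same W

open scoped MatrixOrder in
theorem psd_factor {n : Type*} [Fintype n] [DecidableEq n] (z : Matrix n n ℂ)
    (hz : z.PosSemidef) : ∃ B : Matrix n n ℂ, z = Bᴴ * B :=
  CStarAlgebra.nonneg_iff_eq_star_mul_self.mp hz.nonneg

theorem omega_pos (a : ℕ) : (Matrix.of fun (u v : Fin a × Fin a) =>
    (if u.1 = u.2 then (1:ℂ) else 0) * (if v.1 = v.2 then 1 else 0)).PosSemidef := by
  have := Matrix.posSemidef_vecMulVec_self_star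
    (fun u : Fin a × Fin a => if u.1 = u.2 then (1:ℂ) else 0)
  convert this using 1
  ext u v
  simp [Matrix.vecMulVec_apply, apply_ite star]

/-- Corollary "special" (i): φ is (a,b,r)-positive iff its linearization
D_φ : M_{ab} → M_c (determined by D(x ⊗ y) = φ(x,y)) is r-positive. -/
theorem stmt15 {a b c : ℕ} (φ : Mat a →ₗ[ℂ] Mat b →ₗ[ℂ] Mat c)
    (D : Matrix (Fin a × Fin b) (Fin a × Fin b) ℂ →ₗ[ℂ] Mat c)
    (hD : ∀ (x : Mat a) (y : Mat b), D (x ⊗ₖ y) = φ x y) (r : ℕ) :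
    IsPQRPos φ a b r ↔ LinPos (⇑D) r := by
  constructor
  · intro H z hz
    obtain ⟨B, hB⟩ := psd_factor z hz
    have key : linAmpl (⇑D) z = ∑ k, compress (p := a) (q := b)
        (Matrix.of fun u ik => star (B k (u, ik)))
        (ampl φ (Matrix.of fun (u v : Fin a × Fin a) =>
            (if u.1 = u.2 then (1:ℂ) else 0) * (if v.1 = v.2 then 1 else 0))
          (Matrix.of fun (u v : Fin b × Fin b) =>
            (if u.1 = u.2 then (1:ℂ) else 0) * (if v.1 = v.2 then 1 else 0))) := by
      simp only [compress_eq_s15 φ D hD]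
      ext u v
      have h2 : (Matrix.of fun e f => z (u.1, e) (v.1, f)) =
          ∑ k, (Matrix.of fun e f => star (B k (u.1, e)) * B k (v.1, f)) := by
        ext e f
        simp [hB, Matrix.mul_apply, Matrix.sum_apply]
      simp only [linAmpl, Matrix.of_apply, Matrix.sum_apply]
      rw [h2, map_sum, Matrix.sum_apply]
      refine Finset.sum_congr rfl fun k _ => ?_
      refine congrArg (fun M => D M u.2 v.2) ?_
      ext e f
      simp only [zmat, Matrix.of_apply, starRingEnd_apply, star_star]
      rw [Finset.sum_eq_single e, Finset.sum_eq_single f]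
      · simp
      · intro g _ hg
        have : ¬ (g.1 = f.1 ∧ g.2 = f.2) := fun h => hg (Prod.ext h.1 h.2)
        by_cases h1 : g.1 = f.1 <;> simp_all
      · simp
      · intro g _ hg
        have : ¬ (g.1 = e.1 ∧ g.2 = e.2) := fun h => hg (Prod.ext h.1 h.2)
        by_cases h1 : g.1 = e.1 <;> simp_all
      · simp
    rw [key]
    exact Matrix.posSemidef_sum _ fun k _ => H _ (omega_pos a) _ (omega_pos b) _
  · intro H x hx y hy α
    rw [compress_eq_s15 φ D hD]
    exact H _ (zmat_pos α x hx y hy)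
end
end
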